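/- Let μ be a measure on ℂ, w : ℂ → ℂ measurable, α₁, α₂, α₃ ∈ ℂ pairwise distinct, and ℓ ≥ 1 an integer. Assume μ-almost every h satisfies h ∉ {0, α₁, α₂, α₃}, and that for every n = (n₁,n₂) ∈ ℤ² and every integer m with |m| ≤ ℓ+1 the function h ↦ w(h)·h^m·(h−α₁)^{n₁−N(n)}·(h−α₂)^{n₂−N(n)}·(h−α₃)^{−N(n)} (integer powers, N(n)=⌊(n₁+n₂+2)/3⌋) is μ-integrable; let ω_m(n) denote its integral. For k ∈ {−1, 0, 1} let D_k(n) = det(ω_{k−a+b}(n))_{a,b=1,…,ℓ+k}, with the convention D_{−1}(n) = 1 when ℓ = 1. Assume D₀(n) ≠ 0 and D₁(n) ≠ 0 for every n ∈ ℤ². Then the function u : ℤ² → ℂ defined by u(n) = D_{−1}(n)/D₀(n) for n ∈ Λ⁺ and u(n) = −D₀(n)/D₁(n) for n ∈ Λ⁻ (arbitrary on the remaining points) satisfies the honeycomb field equations with constants Γ₁ = α₂−α₃, Γ₂ = α₃−α₁, Γ₃ = α₁−α₂; in particular all the required differences are nonzero. -/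

import Mathlib

open MeasureTheory

/-- The three honeycomb edge vectors in `ℤ²`. -/
def eHL : Fin 3 → ℤ × ℤ := ![(1, 0), (0, 1), (-1, -1)]

/-- `u` satisfies the honeycomb field equations with constants `Γ`. -/
def HoneycombEqs (Γ : Fin 3 → ℂ) (u : ℤ × ℤ → ℂ) : Prop :=
  (∀ m : ℤ × ℤ, (m.1 + m.2) % 3 = 0 →
    (∀ i : Fin 3, u m - u (m + eHL i) ≠ 0) ∧
    ∑ i : Fin 3, Γ i / (u m - u (m + eHL i)) = 0) ∧
  (∀ m : ℤ × ℤ, (m.1 + m.2) % 3 = 1 →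
    (∀ i : Fin 3, u m - u (m - eHL i) ≠ 0) ∧
    ∑ i : Fin 3, Γ i / (u m - u (m - eHL i)) = 0)

/-- `N(n) = ⌊(n₁ + n₂ + 2)/3⌋`. -/
def NHL (n : ℤ × ℤ) : ℤ := (n.1 + n.2 + 2) / 3

/-!
Write `L_n` for the functional `h ^ m ↦ ω_m(n)`. Off `Λ⁺`, moving from `n` to `n + e_j` multiplies
the weight by `h - α_j`, so `L_{n + e_j} f = L_n ((h - α_j) f)`. Up to a common sign, `u(n)` is the
top coefficient of the polynomial dual to a row of the Toeplitz system of `L_n`: `p_n` for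
`n ∈ Λ⁺`, and `q_n` (one degree higher) for `n ∈ Λ⁻`. If `n ∈ Λ⁻` and `{i, j, l} = {1, 2, 3}`,
then `(X - α_j) p_{n - e_i} - q_n` is annihilated by `f ↦ L_{n + e_l} (h ^ (-a) f)` for
`0 ≤ a < ℓ`, hence it equals `u(n - e_i) - u(n)` times a polynomial `g_{n + e_l}`. Eliminating `q`
(around a point of `Λ⁺`) or `p` (around a point of `Λ⁻`) between the two choices of `j` writes
`Γ_i / (u(n - e_i) - u(n))` times a fixed nonzero polynomial as a difference of two consecutive
terms of a cyclic sequence, and the sum over `i` telescopes to zero.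
-/

open Polynomial

section DegreeLT

variable {R : Type*} [CommRing R]

theorem mem_degreeLT_of_coeff_eq_zero {N : ℕ} {p : R[X]} (hp : p ∈ degreeLT R (N + 1))
    (hN : p.coeff N = 0) : p ∈ degreeLT R N := by
  rw [mem_degreeLT, degree_lt_iff_coeff_zero] at hp ⊢
  intro m hm
  rcases hm.eq_or_lt with rfl | hlt
  · exact hN
  · exact hp m hlt

theorem X_sub_C_mul_mem_degreeLT {N : ℕ} (x : R) {p : R[X]} (hp : p ∈ degreeLT R N) :
    (X - C x) * p ∈ degreeLT R (N + 1) := by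
  rw [mem_degreeLT, degree_lt_iff_coeff_zero] at hp ⊢
  rintro (_ | m) hm
  · omega
  · rw [sub_mul, coeff_sub, coeff_X_mul, coeff_C_mul, hp m (by omega), hp (m + 1) (by omega),
      mul_zero, sub_zero]

theorem coeff_succ_X_sub_C_mul {N : ℕ} (x : R) {p : R[X]} (hp : p ∈ degreeLT R (N + 1)) :
    ((X - C x) * p).coeff (N + 1) = p.coeff N := by
  rw [mem_degreeLT, degree_lt_iff_coeff_zero] at hp
  rw [sub_mul, coeff_sub, coeff_X_mul, coeff_C_mul, hp (N + 1) le_rfl, mul_zero, sub_zero]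

end DegreeLT

section MomentFunctional

variable {R : Type*} [CommRing R]

/-- The functional `p ↦ L(h ^ s * p(h))` on polynomials, where `L` is the functional on Laurent
polynomials with moments `L(h ^ m) = c m`. -/
noncomputable def momentFunctional (c : ℤ → R) (s : ℤ) : R[X] →ₗ[R] R :=
  lsum fun b => LinearMap.mulRight R (c (s + b))

theorem momentFunctional_eq_sum (c : ℤ → R) (s : ℤ) {N : ℕ} {p : R[X]} (hp : p ∈ degreeLT R N) :
    momentFunctional c s p = ∑ b : Fin N, p.coeff b * c (s + b) :=
  (sum_fin _ (fun _ => zero_mul _) (mem_degreeLT.1 hp)).symm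

theorem momentFunctional_monomial (c : ℤ → R) (s : ℤ) (b : ℕ) (x : R) :
    momentFunctional c s (monomial b x) = x * c (s + b) :=
  sum_monomial_index x (fun b x => x * c (s + b)) (zero_mul _)

theorem momentFunctional_X_mul (c : ℤ → R) (s : ℤ) (p : R[X]) :
    momentFunctional c s (X * p) = momentFunctional c (s + 1) p := by
  induction p using Polynomial.induction_on' with
  | add p q hp hq => rw [mul_add, map_add, map_add, hp, hq]
  | monomial b x =>
    rw [X_mul_monomial, momentFunctional_monomial, momentFunctional_monomial, Nat.cast_succ,
      add_right_comm s 1, add_assoc]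

theorem momentFunctional_X_sub_C_mul (c : ℤ → R) (s : ℤ) (x : R) (p : R[X]) :
    momentFunctional c s ((X - C x) * p) =
      momentFunctional c (s + 1) p - x * momentFunctional c s p := by
  rw [sub_mul, map_sub, momentFunctional_X_mul, C_mul', map_smul, smul_eq_mul]

/-- On the window of indices `-k ≤ m ≤ k + 1`, the sequence `c'` consists of the moments of the
weight with moments `c` multiplied by `h - x` (its Christoffel transform). Nothing is required
outside the window because only finitely many moments of the honeycomb weights need to exist. -/
def IsChristoffelTransform (k : ℕ) (x : R) (c c' : ℤ → R) : Prop :=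
  ∀ m ∈ Set.Icc (-k : ℤ) (k + 1), c' m = c (m + 1) - x * c m

theorem IsChristoffelTransform.momentFunctional_eq {k : ℕ} {x : R} {c c' : ℤ → R}
    (h : IsChristoffelTransform k x c c') {a : ℕ} (ha : a ≤ k) {p : R[X]}
    (hp : p ∈ degreeLT R (k + 2)) :
    momentFunctional c' (-a) p = momentFunctional c (-a) ((X - C x) * p) := by
  rw [momentFunctional_X_sub_C_mul]
  simp only [momentFunctional_eq_sum _ _ hp, Finset.mul_sum, ← Finset.sum_sub_distrib]
  refine Finset.sum_congr rfl fun b _ => ?_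
  rw [h (-a + b) ⟨by omega, by omega⟩, add_right_comm (-a : ℤ) 1]
  ring

/-- The `N × N` Toeplitz matrix of `c` with `c t` on the diagonal; its rows represent the
functionals `momentFunctional c (t - a)`, `a < N`, on polynomials of degree less than `N`. -/
def toeplitzMatrix (c : ℤ → R) (t : ℤ) (N : ℕ) : Matrix (Fin N) (Fin N) R :=
  Matrix.of fun a b => c (t - a + b)

theorem toeplitzMatrix_mulVec_coeff (c : ℤ → R) (t : ℤ) {N : ℕ} {p : R[X]}
    (hp : p ∈ degreeLT R N) (a : Fin N) :
    (toeplitzMatrix c t N).mulVec (fun b => p.coeff b) a = momentFunctional c (t - a) p := by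
  rw [momentFunctional_eq_sum _ _ hp]
  simp only [Matrix.mulVec, dotProduct, toeplitzMatrix, Matrix.of_apply, mul_comm]

end MomentFunctional

section Toeplitz

variable {K : Type*} [Field K]

theorem eq_zero_of_momentFunctional_eq_zero {c : ℤ → K} {t : ℤ} {N : ℕ}
    (hdet : (toeplitzMatrix c t N).det ≠ 0) {p : K[X]} (hp : p ∈ degreeLT K N)
    (h : ∀ a < N, momentFunctional c (t - a) p = 0) : p = 0 := by
  have hcoeff : (fun b : Fin N => p.coeff b) = 0 :=
    Matrix.eq_zero_of_mulVec_eq_zero hdet <| funext fun a =>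
      (toeplitzMatrix_mulVec_coeff c t hp a).trans (h a a.2)
  ext m
  rcases lt_or_ge m N with hm | hm
  · exact congrFun hcoeff ⟨m, hm⟩
  · exact (degree_lt_iff_coeff_zero _ _).1 (mem_degreeLT.1 hp) m hm

/-- The polynomial `p` of degree less than `N` with `momentFunctional c (t - a) p = y a` for all
`a < N`. It is meaningful only for a nonsingular Toeplitz matrix, since otherwise the matrix
inverse is `0`. -/
noncomputable def toeplitzSolution (c : ℤ → K) (t : ℤ) (N : ℕ) (y : Fin N → K) : K[X] :=
  ((degreeLTEquiv K N).symm ((toeplitzMatrix c t N)⁻¹.mulVec y) : degreeLT K N)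

theorem toeplitzSolution_mem_degreeLT (c : ℤ → K) (t : ℤ) (N : ℕ) (y : Fin N → K) :
    toeplitzSolution c t N y ∈ degreeLT K N :=
  Subtype.property _

theorem coeff_toeplitzSolution (c : ℤ → K) (t : ℤ) (N : ℕ) (y : Fin N → K) (b : Fin N) :
    (toeplitzSolution c t N y).coeff b = (toeplitzMatrix c t N)⁻¹.mulVec y b :=
  congrFun ((degreeLTEquiv K N).apply_symm_apply _) b

theorem momentFunctional_toeplitzSolution {c : ℤ → K} {t : ℤ} {N : ℕ}
    (hdet : (toeplitzMatrix c t N).det ≠ 0) (y : Fin N → K) (a : Fin N) :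
    momentFunctional c (t - a) (toeplitzSolution c t N y) = y a := by
  rw [← toeplitzMatrix_mulVec_coeff c t (toeplitzSolution_mem_degreeLT c t N y)]
  simp only [coeff_toeplitzSolution]
  rw [Matrix.mulVec_mulVec, Matrix.mul_nonsing_inv _ hdet.isUnit, Matrix.one_mulVec]

/-- The polynomial of degree at most `N` dual to the first row of the Toeplitz matrix of size
`N + 1`: it is sent to `1` by `momentFunctional c t` and to `0` by `momentFunctional c (t - a)` for
`1 ≤ a ≤ N`. -/
noncomputable def dualPoly (c : ℤ → K) (t : ℤ) (N : ℕ) : K[X] :=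
  toeplitzSolution c t (N + 1) (Pi.single 0 1)

theorem dualPoly_mem_degreeLT (c : ℤ → K) (t : ℤ) (N : ℕ) :
    dualPoly c t N ∈ degreeLT K (N + 1) :=
  toeplitzSolution_mem_degreeLT _ _ _ _

theorem momentFunctional_dualPoly {c : ℤ → K} {t : ℤ} {N : ℕ}
    (hdet : (toeplitzMatrix c t (N + 1)).det ≠ 0) {a : ℕ} (ha : a ≤ N) :
    momentFunctional c (t - a) (dualPoly c t N) = if a = 0 then 1 else 0 := by
  rw [dualPoly, momentFunctional_toeplitzSolution hdet _ ⟨a, Nat.lt_succ_of_le ha⟩]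
  simp only [Pi.single_apply, Fin.ext_iff, Fin.val_zero]

theorem dualPoly_ne_zero {c : ℤ → K} {t : ℤ} {N : ℕ}
    (hdet : (toeplitzMatrix c t (N + 1)).det ≠ 0) : dualPoly c t N ≠ 0 := by
  intro h
  simpa [h] using momentFunctional_dualPoly hdet (Nat.zero_le N)

theorem coeff_dualPoly (c : ℤ → K) (t : ℤ) (N : ℕ) :
    (dualPoly c t N).coeff N =
      (-1) ^ N * ((toeplitzMatrix c (t - 1) N).det / (toeplitzMatrix c t (N + 1)).det) := by
  have hminor : (toeplitzMatrix c t (N + 1)).submatrix (Fin.succAbove 0)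
      (Fin.succAbove (Fin.last N)) = toeplitzMatrix c (t - 1) N := by
    ext a b
    simp only [toeplitzMatrix, Matrix.submatrix_apply, Matrix.of_apply, Fin.succAbove_last,
      Fin.zero_succAbove, Fin.val_succ, Fin.val_castSucc]
    congr 1
    push_cast
    ring
  have hcoeff := coeff_toeplitzSolution c t (N + 1) (Pi.single 0 1) (Fin.last N)
  rw [Fin.val_last, Matrix.mulVec_single_one, Matrix.inv_def] at hcoeff
  simp only [Matrix.col_apply, Matrix.smul_apply, Matrix.adjugate_fin_succ_eq_det_submatrix,
    hminor, Ring.inverse_eq_inv', smul_eq_mul, Fin.val_last, Fin.val_zero, zero_add] at hcoeff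
  rw [dualPoly, hcoeff]
  ring

/-- The monic polynomial of degree `N` annihilated by `momentFunctional c (t - a)` for all
`a < N`. -/
noncomputable def monicOrthogonalPoly (c : ℤ → K) (t : ℤ) (N : ℕ) : K[X] :=
  X ^ N - toeplitzSolution c t N fun a => momentFunctional c (t - a) (X ^ N)

theorem monicOrthogonalPoly_mem_degreeLT (c : ℤ → K) (t : ℤ) (N : ℕ) :
    monicOrthogonalPoly c t N ∈ degreeLT K (N + 1) :=
  sub_mem (mem_degreeLT.2 (by rw [degree_X_pow]; exact_mod_cast N.lt_succ_self))
    (degreeLT_mono N.le_succ (toeplitzSolution_mem_degreeLT _ _ _ _))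

theorem coeff_monicOrthogonalPoly (c : ℤ → K) (t : ℤ) (N : ℕ) :
    (monicOrthogonalPoly c t N).coeff N = 1 := by
  have hlow := mem_degreeLT.1 <|
    toeplitzSolution_mem_degreeLT c t N fun a => momentFunctional c (t - a) (X ^ N)
  rw [monicOrthogonalPoly, coeff_sub, coeff_X_pow_self,
    (degree_lt_iff_coeff_zero _ _).1 hlow N le_rfl, sub_zero]

theorem momentFunctional_monicOrthogonalPoly {c : ℤ → K} {t : ℤ} {N : ℕ}
    (hdet : (toeplitzMatrix c t N).det ≠ 0) {a : ℕ} (ha : a < N) :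
    momentFunctional c (t - a) (monicOrthogonalPoly c t N) = 0 := by
  rw [monicOrthogonalPoly, map_sub, momentFunctional_toeplitzSolution hdet _ ⟨a, ha⟩, sub_self]

theorem eq_coeff_smul_monicOrthogonalPoly {c : ℤ → K} {t : ℤ} {N : ℕ}
    (hdet : (toeplitzMatrix c t N).det ≠ 0) {r : K[X]} (hr : r ∈ degreeLT K (N + 1))
    (h : ∀ a < N, momentFunctional c (t - a) r = 0) :
    r = r.coeff N • monicOrthogonalPoly c t N := by
  rw [← sub_eq_zero]
  refine eq_zero_of_momentFunctional_eq_zero hdet (mem_degreeLT_of_coeff_eq_zero ?_ ?_)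
    fun a ha => ?_
  · exact sub_mem hr (Submodule.smul_mem _ _ (monicOrthogonalPoly_mem_degreeLT _ _ _))
  · rw [coeff_sub, coeff_smul, coeff_monicOrthogonalPoly, smul_eq_mul, mul_one, sub_self]
  · rw [map_sub, map_smul, h a ha, momentFunctional_monicOrthogonalPoly hdet ha, smul_zero,
      sub_zero]

end Toeplitz

section ChristoffelSquare

variable {K : Type*} [Field K] {k : ℕ} {x y : K} {c cx cy cxy : ℤ → K}

theorem X_sub_C_mul_dualPoly_sub_dualPoly
    (hy : IsChristoffelTransform k y c cy) (hxy : IsChristoffelTransform k x cy cxy)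
    (hdet : (toeplitzMatrix c 1 (k + 2)).det ≠ 0)
    (hdety : (toeplitzMatrix cy 0 (k + 1)).det ≠ 0)
    (hdetxy : (toeplitzMatrix cxy 0 (k + 1)).det ≠ 0) :
    (X - C x) * dualPoly cxy 0 k - dualPoly c 1 (k + 1) =
      ((dualPoly cxy 0 k).coeff k - (dualPoly c 1 (k + 1)).coeff (k + 1)) •
        monicOrthogonalPoly cy 0 (k + 1) := by
  have hp : dualPoly cxy 0 k ∈ degreeLT K (k + 1) := dualPoly_mem_degreeLT _ _ _
  have hq : dualPoly c 1 (k + 1) ∈ degreeLT K (k + 2) := dualPoly_mem_degreeLT _ _ _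
  rw [← coeff_succ_X_sub_C_mul x hp, ← coeff_sub]
  refine eq_coeff_smul_monicOrthogonalPoly hdety (sub_mem (X_sub_C_mul_mem_degreeLT x hp) hq)
    fun a ha => ?_
  have hak : a ≤ k := Nat.le_of_lt_succ ha
  have hp_moment : momentFunctional cy (-a) ((X - C x) * dualPoly cxy 0 k) =
      if a = 0 then 1 else 0 := by
    rw [← hxy.momentFunctional_eq hak (degreeLT_mono (Nat.le_succ _) hp), ← zero_sub,
      momentFunctional_dualPoly hdetxy hak]
  have hq_shift : momentFunctional c (-a + 1) (dualPoly c 1 (k + 1)) =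
      if a = 0 then 1 else 0 := by
    rw [neg_add_eq_sub, momentFunctional_dualPoly hdet (by omega)]
  have hq_orthogonal : momentFunctional c (-a) (dualPoly c 1 (k + 1)) = 0 := by
    simpa using momentFunctional_dualPoly hdet ha
  rw [zero_sub, map_sub, hp_moment, hy.momentFunctional_eq hak hq, momentFunctional_X_sub_C_mul,
    hq_shift, hq_orthogonal, mul_zero, sub_zero, sub_self]

theorem X_sub_C_mul_dualPoly_ne_dualPoly (hx : IsChristoffelTransform k x c cx)
    (hdet : (toeplitzMatrix c 1 (k + 2)).det ≠ 0)
    (hdetx : (toeplitzMatrix cx 0 (k + 1)).det ≠ 0)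
    (hdetxy : (toeplitzMatrix cxy 0 (k + 1)).det ≠ 0) :
    (X - C x) * dualPoly cxy 0 k ≠ dualPoly c 1 (k + 1) := by
  intro heq
  have hp : dualPoly cxy 0 k ∈ degreeLT K (k + 1) := dualPoly_mem_degreeLT _ _ _
  refine dualPoly_ne_zero hdetxy (eq_zero_of_momentFunctional_eq_zero hdetx hp fun a ha => ?_)
  rw [zero_sub, hx.momentFunctional_eq (Nat.le_of_lt_succ ha) (degreeLT_mono (Nat.le_succ _) hp),
    heq]
  simpa using momentFunctional_dualPoly hdet ha

end ChristoffelSquare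

section CyclicSums

variable {K : Type*} [Field K]

theorem sum_div_eq_zero_of_smul_eq_smul_sub {ι V : Type*} [Fintype ι] [AddCommGroup V]
    [Module K V] {v : V} (hv : v ≠ 0) {γ δ : ι → K} (hδ : ∀ i, δ i ≠ 0) (g : ι → V)
    (σ τ : Equiv.Perm ι) (h : ∀ i, γ i • v = δ i • (g (σ i) - g (τ i))) :
    ∑ i, γ i / δ i = 0 := by
  have hterm : ∀ i, (γ i / δ i) • v = g (σ i) - g (τ i) := fun i => by
    rw [div_eq_inv_mul, mul_smul, h i, inv_smul_smul₀ (hδ i)]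
  refine (smul_eq_zero.1 ?_).resolve_right hv
  rw [Finset.sum_smul, Finset.sum_congr rfl fun i _ => hterm i, Finset.sum_sub_distrib,
    Equiv.sum_comp σ g, Equiv.sum_comp τ g, sub_self]

variable {α δ : Fin 3 → K}

theorem sum_div_eq_zero_of_common_left {p : K[X]} {q g : Fin 3 → K[X]} (hp : p ≠ 0)
    (hδ : ∀ i, δ i ≠ 0)
    (h₁ : ∀ i, (X - C (α (i + 1))) * p - q i = δ i • g (i + 1))
    (h₂ : ∀ i, (X - C (α (i + 2))) * p - q i = δ i • g (i + 2)) :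
    ∑ i, (α (i + 1) - α (i + 2)) / δ i = 0 := by
  refine sum_div_eq_zero_of_smul_eq_smul_sub hp hδ g (Equiv.addRight 2) (Equiv.addRight 1)
    fun i => ?_
  rw [Equiv.coe_addRight, Equiv.coe_addRight, smul_sub, ← h₁, ← h₂, smul_eq_C_mul, C_sub]
  ring

theorem sum_div_eq_zero_of_common_right {p g : Fin 3 → K[X]} {q : K[X]} (hq : q ≠ 0)
    (hδ : ∀ i, δ i ≠ 0)
    (h₁ : ∀ i, (X - C (α (i + 1))) * p i - q = δ i • g (i + 2))
    (h₂ : ∀ i, (X - C (α (i + 2))) * p i - q = δ i • g (i + 1)) :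
    ∑ i, (α (i + 1) - α (i + 2)) / δ i = 0 := by
  refine sum_div_eq_zero_of_smul_eq_smul_sub hq hδ (fun j => (X - C (α j)) * g j)
    (Equiv.addRight 1) (Equiv.addRight 2) fun i => ?_
  simp only [Equiv.coe_addRight]
  rw [smul_sub, ← mul_smul_comm, ← mul_smul_comm, ← h₁, ← h₂, smul_eq_C_mul, C_sub]
  ring

end CyclicSums

section Honeycomb

variable {K : Type*} [Field K] {k : ℕ} {α : Fin 3 → K} {ω : ℤ → ℤ × ℤ → K} {u : ℤ × ℤ → K}

theorem eHL_add_eHL_add_eHL (i : Fin 3) : eHL i + eHL (i + 1) + eHL (i + 2) = 0 := by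
  fin_cases i <;> rfl

theorem eHL_add_eHL_add_eHL' (i : Fin 3) : eHL i + eHL (i + 2) + eHL (i + 1) = 0 := by
  rw [add_right_comm, eHL_add_eHL_add_eHL]

theorem add_eHL_emod_three (n : ℤ × ℤ) (i : Fin 3) :
    ((n + eHL i).1 + (n + eHL i).2) % 3 = (n.1 + n.2 + 1) % 3 := by
  fin_cases i <;> simp [eHL] <;> omega

theorem sub_eHL_emod_three (n : ℤ × ℤ) (i : Fin 3) :
    ((n - eHL i).1 + (n - eHL i).2) % 3 = (n.1 + n.2 - 1) % 3 := by
  fin_cases i <;> simp [eHL] <;> omega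

/-- A family of moment sequences `ω · n` indexed by `ℤ²`, in which a step along `eHL i` that does
not start in `Λ⁺` multiplies the weight by `h - α i`, and whose Toeplitz determinants `D₀` (off
`Λ⁻`) and `D₁` (on `Λ⁻`) do not vanish. Here `k = ℓ - 1`. -/
structure IsHoneycombMomentFamily (k : ℕ) (α : Fin 3 → K) (ω : ℤ → ℤ × ℤ → K) : Prop where
  transform : ∀ n : ℤ × ℤ, (n.1 + n.2) % 3 ≠ 0 → ∀ i,
    IsChristoffelTransform k (α i) (ω · n) (ω · (n + eHL i))
  det_zero_ne_zero : ∀ n : ℤ × ℤ, (n.1 + n.2) % 3 ≠ 1 →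
    (toeplitzMatrix (ω · n) 0 (k + 1)).det ≠ 0
  det_one_ne_zero : ∀ n : ℤ × ℤ, (n.1 + n.2) % 3 = 1 →
    (toeplitzMatrix (ω · n) 1 (k + 2)).det ≠ 0

/-- The function `u` is `D₋₁ / D₀` on `Λ⁺` and `-D₀ / D₁` on `Λ⁻`, for the Toeplitz determinants
of the moment sequences `ω · n`. Here `k = ℓ - 1`. -/
structure IsToeplitzRatio (k : ℕ) (ω : ℤ → ℤ × ℤ → K) (u : ℤ × ℤ → K) : Prop where
  eq_on_plus : ∀ n : ℤ × ℤ, (n.1 + n.2) % 3 = 0 →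
    u n = (toeplitzMatrix (ω · n) (-1) k).det / (toeplitzMatrix (ω · n) 0 (k + 1)).det
  eq_on_minus : ∀ n : ℤ × ℤ, (n.1 + n.2) % 3 = 1 →
    u n = -(toeplitzMatrix (ω · n) 0 (k + 1)).det / (toeplitzMatrix (ω · n) 1 (k + 2)).det

theorem IsToeplitzRatio.coeff_dualPoly_plus (hu : IsToeplitzRatio k ω u) {n : ℤ × ℤ}
    (hn : (n.1 + n.2) % 3 = 0) : (dualPoly (ω · n) 0 k).coeff k = (-1) ^ k * u n := by
  rw [coeff_dualPoly, zero_sub, hu.eq_on_plus n hn]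

theorem IsToeplitzRatio.coeff_dualPoly_minus (hu : IsToeplitzRatio k ω u) {n : ℤ × ℤ}
    (hn : (n.1 + n.2) % 3 = 1) :
    (dualPoly (ω · n) 1 (k + 1)).coeff (k + 1) = (-1) ^ k * u n := by
  rw [coeff_dualPoly, sub_self, hu.eq_on_minus n hn]
  ring

namespace IsHoneycombMomentFamily

theorem X_sub_C_mul_dualPoly_sub_eq_smul (hω : IsHoneycombMomentFamily k α ω)
    (hu : IsToeplitzRatio k ω u) {n : ℤ × ℤ} (hn : (n.1 + n.2) % 3 = 1) {i j l : Fin 3}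
    (hijl : eHL i + eHL j + eHL l = 0) :
    (X - C (α j)) * dualPoly (ω · (n - eHL i)) 0 k - dualPoly (ω · n) 1 (k + 1) =
      (u (n - eHL i) - u n) • ((-1) ^ k * monicOrthogonalPoly (ω · (n + eHL l)) 0 (k + 1)) := by
  have hl := add_eHL_emod_three n l
  have hi := sub_eHL_emod_three n i
  have hpath : n + eHL l + eHL j = n - eHL i := by linear_combination hijl
  have hjl := hω.transform (n + eHL l) (by omega) j
  rw [hpath] at hjl
  rw [X_sub_C_mul_dualPoly_sub_dualPoly (hω.transform n (by omega) l) hjl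
    (hω.det_one_ne_zero n hn) (hω.det_zero_ne_zero _ (by omega))
    (hω.det_zero_ne_zero _ (by omega)), hu.coeff_dualPoly_plus (by omega),
    hu.coeff_dualPoly_minus hn, ← mul_sub, mul_comm, mul_smul, smul_eq_C_mul (_ ^ k), C_pow,
    C_neg, C_1]

theorem field_sub_ne_zero (hω : IsHoneycombMomentFamily k α ω) (hu : IsToeplitzRatio k ω u)
    {n : ℤ × ℤ} (hn : (n.1 + n.2) % 3 = 1) (i : Fin 3) : u (n - eHL i) - u n ≠ 0 := by
  have hi := sub_eHL_emod_three n i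
  have hj := add_eHL_emod_three n (i + 1)
  intro hzero
  have hlin := hω.X_sub_C_mul_dualPoly_sub_eq_smul hu hn (eHL_add_eHL_add_eHL i)
  rw [hzero, zero_smul, sub_eq_zero] at hlin
  exact X_sub_C_mul_dualPoly_ne_dualPoly (hω.transform n (by omega) (i + 1))
    (hω.det_one_ne_zero n hn) (hω.det_zero_ne_zero _ (by omega))
    (hω.det_zero_ne_zero _ (by omega)) hlin

theorem sum_div_eq_zero_plus (hω : IsHoneycombMomentFamily k α ω) (hu : IsToeplitzRatio k ω u)
    {m : ℤ × ℤ} (hm : (m.1 + m.2) % 3 = 0) :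
    ∑ i, (α (i + 1) - α (i + 2)) / (u m - u (m + eHL i)) = 0 := by
  have hmod : ∀ i, ((m + eHL i).1 + (m + eHL i).2) % 3 = 1 := fun i => by
    have := add_eHL_emod_three m i
    omega
  have hlin : ∀ {i j l : Fin 3}, eHL i + eHL j + eHL l = 0 →
      (X - C (α j)) * dualPoly (ω · m) 0 k - dualPoly (ω · (m + eHL i)) 1 (k + 1) =
        (u m - u (m + eHL i)) •
          ((-1) ^ k * monicOrthogonalPoly (ω · (m - eHL j)) 0 (k + 1)) := by
    intro i j l hijl
    have hpath : m + eHL i + eHL l = m - eHL j := by linear_combination hijl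
    simpa only [add_sub_cancel_right, hpath] using
      hω.X_sub_C_mul_dualPoly_sub_eq_smul hu (hmod i) hijl
  refine sum_div_eq_zero_of_common_left
    (g := fun j => (-1) ^ k * monicOrthogonalPoly (ω · (m - eHL j)) 0 (k + 1))
    (dualPoly_ne_zero (hω.det_zero_ne_zero m (by omega))) (fun i => ?_)
    (fun i => hlin (eHL_add_eHL_add_eHL i)) (fun i => hlin (eHL_add_eHL_add_eHL' i))
  simpa only [add_sub_cancel_right] using hω.field_sub_ne_zero hu (hmod i) i

theorem sum_div_eq_zero_minus (hω : IsHoneycombMomentFamily k α ω) (hu : IsToeplitzRatio k ω u)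
    {m : ℤ × ℤ} (hm : (m.1 + m.2) % 3 = 1) :
    ∑ i, (α (i + 1) - α (i + 2)) / (u (m - eHL i) - u m) = 0 :=
  sum_div_eq_zero_of_common_right
    (g := fun l => (-1) ^ k * monicOrthogonalPoly (ω · (m + eHL l)) 0 (k + 1))
    (dualPoly_ne_zero (hω.det_one_ne_zero m hm)) (hω.field_sub_ne_zero hu hm)
    (fun i => hω.X_sub_C_mul_dualPoly_sub_eq_smul hu hm (eHL_add_eHL_add_eHL i))
    (fun i => hω.X_sub_C_mul_dualPoly_sub_eq_smul hu hm (eHL_add_eHL_add_eHL' i))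

end IsHoneycombMomentFamily

end Honeycomb

section HoneycombWeight

variable {K : Type*} [Field K] {α : Fin 3 → K}

/-- The exponents of the factors `h - α i` in the weight attached to the lattice point `n`. -/
def honeycombExponent (n : ℤ × ℤ) : Fin 3 → ℤ := ![n.1 - NHL n, n.2 - NHL n, -NHL n]

theorem honeycombExponent_add_eHL {n : ℤ × ℤ} (hn : (n.1 + n.2) % 3 ≠ 0) (i : Fin 3) :
    honeycombExponent (n + eHL i) = honeycombExponent n + Pi.single i 1 := by
  ext j
  fin_cases i <;> fin_cases j <;> simp [honeycombExponent, eHL, NHL] <;> omega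

/-- The rational factor of the weight attached to the lattice point `n`. -/
def honeycombWeight (α : Fin 3 → K) (n : ℤ × ℤ) (h : K) : K :=
  ∏ i, (h - α i) ^ honeycombExponent n i

theorem mul_honeycombWeight_mul (α : Fin 3 → K) (n : ℤ × ℤ) (h a b : K) :
    a * honeycombWeight α n h * b =
      a * b * (h - α 0) ^ (n.1 - NHL n) * (h - α 1) ^ (n.2 - NHL n) * (h - α 2) ^ (-NHL n) := by
  rw [honeycombWeight, Fin.prod_univ_three]
  simp only [honeycombExponent, Matrix.cons_val]
  ring

theorem honeycombWeight_add_eHL {n : ℤ × ℤ} (hn : (n.1 + n.2) % 3 ≠ 0) (i : Fin 3) {h : K}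
    (hh : ∀ j, h ≠ α j) :
    honeycombWeight α (n + eHL i) h = honeycombWeight α n h * (h - α i) := by
  have hfactor : ∏ j, (h - α j) ^ (Pi.single i 1 : Fin 3 → ℤ) j = h - α i := by
    rw [Finset.prod_eq_single i (fun j _ hj => by rw [Pi.single_eq_of_ne hj, zpow_zero]) (by simp),
      Pi.single_eq_same, zpow_one]
  simp only [honeycombWeight, honeycombExponent_add_eHL hn, Pi.add_apply,
    zpow_add₀ (sub_ne_zero.2 (hh _)), Finset.prod_mul_distrib, hfactor]

end HoneycombWeight

section Integrals

variable {𝕜 : Type*} [RCLike 𝕜] [MeasurableSpace 𝕜] {μ : Measure 𝕜} {k : ℕ}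

theorem isChristoffelTransform_integral {f g : 𝕜 → 𝕜} {x : 𝕜}
    (hf : ∀ m ∈ Set.Icc (-k : ℤ) (k + 2), Integrable (fun h => f h * h ^ m) μ)
    (hne : ∀ᵐ h ∂μ, h ≠ 0) (hg : ∀ᵐ h ∂μ, g h = f h * (h - x)) :
    IsChristoffelTransform k x (fun m => ∫ h, f h * h ^ m ∂μ) (fun m => ∫ h, g h * h ^ m ∂μ) := by
  rintro m ⟨hm₁, hm₂⟩
  beta_reduce
  rw [← integral_const_mul, ← integral_sub (hf (m + 1) ⟨by omega, by omega⟩)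
    ((hf m ⟨by omega, by omega⟩).const_mul x)]
  refine integral_congr_ae ?_
  filter_upwards [hne, hg] with h h_ne hgf
  rw [hgf, zpow_add_one₀ h_ne]
  ring

theorem isChristoffelTransform_integral_honeycombWeight {α : Fin 3 → 𝕜} {w : 𝕜 → 𝕜} {n : ℤ × ℤ}
    (hn : (n.1 + n.2) % 3 ≠ 0) (hae : ∀ᵐ h ∂μ, h ≠ 0 ∧ ∀ i, h ≠ α i)
    (hint : ∀ m ∈ Set.Icc (-k : ℤ) (k + 2),
      Integrable (fun h => w h * honeycombWeight α n h * h ^ m) μ) (i : Fin 3) :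
    IsChristoffelTransform k (α i) (fun m => ∫ h, w h * honeycombWeight α n h * h ^ m ∂μ)
      (fun m => ∫ h, w h * honeycombWeight α (n + eHL i) h * h ^ m ∂μ) :=
  isChristoffelTransform_integral hint (hae.mono fun _ hh => hh.1) <| hae.mono fun _ hh => by
    rw [honeycombWeight_add_eHL hn i hh.2, mul_assoc]

end Integrals

theorem stmt15_general {k : ℕ} {α : Fin 3 → ℂ} {ω : ℤ → ℤ × ℤ → ℂ} {u : ℤ × ℤ → ℂ}
    (hω : IsHoneycombMomentFamily k α ω) (hu : IsToeplitzRatio k ω u) :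
    HoneycombEqs ![α 1 - α 2, α 2 - α 0, α 0 - α 1] u := by
  have hΓ : ![α 1 - α 2, α 2 - α 0, α 0 - α 1] = fun i => α (i + 1) - α (i + 2) := by
    ext i
    fin_cases i <;> rfl
  rw [hΓ]
  refine ⟨fun m hm => ⟨fun i => ?_, hω.sum_div_eq_zero_plus hu hm⟩, fun m hm => ⟨fun i => ?_, ?_⟩⟩
  · have hmod := add_eHL_emod_three m i
    simpa only [add_sub_cancel_right] using hω.field_sub_ne_zero hu (n := m + eHL i) (by omega) i
  · rw [← neg_sub, neg_ne_zero]
    exact hω.field_sub_ne_zero hu hm i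
  · simp only [← neg_sub (u (m - _)), div_neg, Finset.sum_neg_distrib,
      hω.sum_div_eq_zero_minus hu hm, neg_zero]

theorem stmt15 (μ : Measure ℂ) (w : ℂ → ℂ) (hw : Measurable w)
    (α : Fin 3 → ℂ) (hα : Function.Injective α)
    (ℓ : ℕ) (hℓ : 1 ≤ ℓ)
    (hae : ∀ᵐ h ∂μ, h ≠ 0 ∧ ∀ i : Fin 3, h ≠ α i)
    (hint : ∀ n : ℤ × ℤ, ∀ m : ℤ, |m| ≤ (ℓ : ℤ) + 1 →
      Integrable (fun h : ℂ =>
        w h * h ^ m * (h - α 0) ^ (n.1 - NHL n) * (h - α 1) ^ (n.2 - NHL n)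
          * (h - α 2) ^ (-NHL n)) μ)
    (ω : ℤ → ℤ × ℤ → ℂ)
    (hω : ∀ (m : ℤ) (n : ℤ × ℤ),
      ω m n = ∫ h : ℂ,
        w h * h ^ m * (h - α 0) ^ (n.1 - NHL n) * (h - α 1) ^ (n.2 - NHL n)
          * (h - α 2) ^ (-NHL n) ∂μ)
    (Dneg D0 D1 : ℤ × ℤ → ℂ)
    (hDneg : ∀ n, Dneg n
      = Matrix.det (Matrix.of fun a b : Fin (ℓ - 1) => ω (-1 - (a : ℤ) + (b : ℤ)) n))
    (hD0 : ∀ n, D0 n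
      = Matrix.det (Matrix.of fun a b : Fin ℓ => ω (0 - (a : ℤ) + (b : ℤ)) n))
    (hD1 : ∀ n, D1 n
      = Matrix.det (Matrix.of fun a b : Fin (ℓ + 1) => ω (1 - (a : ℤ) + (b : ℤ)) n))
    (hD0ne : ∀ n, D0 n ≠ 0) (hD1ne : ∀ n, D1 n ≠ 0)
    (u : ℤ × ℤ → ℂ)
    (hup : ∀ n : ℤ × ℤ, (n.1 + n.2) % 3 = 0 → u n = Dneg n / D0 n)
    (hun : ∀ n : ℤ × ℤ, (n.1 + n.2) % 3 = 1 → u n = - D0 n / D1 n) :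
    HoneycombEqs ![α 1 - α 2, α 2 - α 0, α 0 - α 1] u := by
  obtain ⟨k, rfl⟩ := Nat.exists_eq_add_of_le' hℓ
  simp only [← mul_honeycombWeight_mul] at hint hω
  have htransform : ∀ n : ℤ × ℤ, (n.1 + n.2) % 3 ≠ 0 → ∀ i,
      IsChristoffelTransform k (α i) (ω · n) (ω · (n + eHL i)) := fun n hn i => by
    simp only [hω]
    exact isChristoffelTransform_integral_honeycombWeight hn hae
      (fun m hm => hint n m (abs_le.2 ⟨by grind, by grind⟩)) i
  exact stmt15_general
    ⟨htransform, fun n _ => hD0 n ▸ hD0ne n, fun n _ => hD1 n ▸ hD1ne n⟩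
    ⟨fun n hn => hDneg n ▸ hD0 n ▸ hup n hn, fun n hn => hD0 n ▸ hD1 n ▸ hun n hn⟩
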